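/- Let k ∈ ℕ, let μ be a finite complex Borel measure on ℝ, ε ∈ (0,1], n, m ∈ ℤ≥0, and u(x) = x - i. Then there exists a finite complex Borel measure ν with total variation ‖ν‖ ≤ ‖|u|^{-1-ε}‖_{L¹(ℝ)}·‖μ‖ such that ∫_ℝ g^{(n)} u^m dμ = ∫_ℝ g^{(n+k)} u^{m+k+ε} dν for every g ∈ C^{n+k}(ℝ) satisfying g^{(n+l)}u^{m+l} ∈ C₀(ℝ) for l = 0,…,k-1 and g^{(n+k)}u^{m+k-1} ∈ L¹(ℝ). -/

import Mathlib

open Complex MeasureTheory Filter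

lemma pw_norm_u (x : ℝ) : ‖(x : ℂ) - I‖ = Real.sqrt (1 + x ^ 2) := by
  rw [Complex.norm_def, Complex.normSq_apply]
  congr 1
  simp
  ring

lemma pw_one_le (x : ℝ) : 1 ≤ ‖(x : ℂ) - I‖ := by
  rw [pw_norm_u]
  apply Real.le_sqrt_of_sq_le
  nlinarith [sq_nonneg x]

lemma pw_abs_le (x : ℝ) : |x| ≤ ‖(x : ℂ) - I‖ := by
  rw [pw_norm_u]
  apply Real.le_sqrt_of_sq_le
  rw [sq_abs]
  linarith

lemma pw_mono {x t : ℝ} (h : |x| ≤ |t|) : ‖(x : ℂ) - I‖ ≤ ‖(t : ℂ) - I‖ := by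
  rw [pw_norm_u, pw_norm_u]
  apply Real.sqrt_le_sqrt
  have := sq_le_sq.mpr h
  linarith

lemma pw_ne (x : ℝ) : (x : ℂ) - I ≠ 0 := by
  have := pw_one_le x
  intro h
  rw [h] at this
  norm_num at this

lemma pw_rpow_eq (ε x : ℝ) :
    ‖(x : ℂ) - I‖ ^ (-(1 + ε)) = (1 + ‖x‖ ^ 2) ^ (-(1 + ε) / 2) := by
  rw [pw_norm_u, Real.sqrt_eq_rpow, ← Real.rpow_mul (by positivity)]
  simp only [Real.norm_eq_abs, sq_abs]
  congr 1
  ring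

lemma pw_integrable (ε : ℝ) (hε : 0 < ε) :
    Integrable (fun x : ℝ => ‖(x : ℂ) - I‖ ^ (-(1 + ε))) volume := by
  simp_rw [pw_rpow_eq]
  apply integrable_rpow_neg_one_add_norm_sq
  simp [hε]

lemma pw_one_le_int (ε : ℝ) (hε0 : 0 < ε) (hε1 : ε ≤ 1) :
    1 ≤ ∫ x : ℝ, ‖(x : ℂ) - I‖ ^ (-(1 + ε)) := by
  have h1 : (1 : ℝ) ≤ ∫ x : ℝ, (1 + x ^ 2)⁻¹ := by
    rw [integral_univ_inv_one_add_sq]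
    linarith [Real.pi_gt_three]
  refine h1.trans (integral_mono integrable_inv_one_add_sq (pw_integrable ε hε0) ?_)
  intro x
  have h2 : (1 + x ^ 2)⁻¹ = ‖(x : ℂ) - I‖ ^ (-(2 : ℝ)) := by
    rw [pw_norm_u, Real.rpow_neg (Real.sqrt_nonneg _), Real.rpow_two, Real.sq_sqrt (by positivity)]
  simp only [h2]
  exact Real.rpow_le_rpow_of_exponent_le (pw_one_le x) (by linarith)

lemma pw_norm_cpow (ε x : ℝ) : ‖((x : ℂ) - I) ^ (ε : ℂ)‖ = ‖(x : ℂ) - I‖ ^ ε :=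
  Complex.norm_cpow_real _ _

/-- the sign / indicator -/
noncomputable def pwS (x t : ℝ) : ℂ :=
  if 0 ≤ x then (if x < t then -1 else 0) else (if t ≤ x then 1 else 0)

noncomputable def pwK (p : ℕ) (x t : ℝ) : ℂ :=
  pwS x t * (((x : ℂ) - t) ^ p / (p.factorial : ℂ))

lemma pwS_meas : Measurable (fun z : ℝ × ℝ => pwS z.1 z.2) := by
  unfold pwS
  refine Measurable.ite (measurableSet_le measurable_const measurable_fst) ?_ ?_
  · exact Measurable.ite (measurableSet_lt measurable_fst measurable_snd)
      measurable_const measurable_const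
  · exact Measurable.ite (measurableSet_le measurable_snd measurable_fst)
      measurable_const measurable_const

lemma pwK_meas (p : ℕ) : Measurable (fun z : ℝ × ℝ => pwK p z.1 z.2) := by
  unfold pwK
  refine pwS_meas.mul ?_
  apply Continuous.measurable
  fun_prop

lemma pwS_bound {x t : ℝ} (h : pwS x t ≠ 0) : ‖pwS x t‖ = 1 ∧ |x| ≤ |t| ∧ |x - t| ≤ |t| := by
  unfold pwS at *
  split_ifs at * with h1 h2 h2
  · refine ⟨by simp, ?_, ?_⟩
    · rw [abs_of_nonneg h1, abs_of_nonneg (by linarith)]; exact h2.le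
    · rw [abs_of_nonneg (by linarith : 0 ≤ t), abs_le]; constructor <;> linarith
  · simp at h
  · push Not at h1
    refine ⟨by simp, ?_, ?_⟩
    · rw [abs_of_neg h1, abs_of_neg (by linarith)]; linarith
    · rw [abs_of_neg (by linarith : t < 0), abs_le]; constructor <;> linarith
  · simp at h

lemma pwK_bound (p m : ℕ) (x t : ℝ) :
    ‖pwK p x t‖ * ‖(x : ℂ) - I‖ ^ m ≤ ‖(t : ℂ) - I‖ ^ (m + p) := by
  by_cases h : pwS x t = 0
  · simp only [pwK, h, zero_mul, norm_zero]; positivity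
  obtain ⟨h1, h2, h3⟩ := pwS_bound h
  have h4 : ‖(x : ℂ) - t‖ ≤ ‖(t : ℂ) - I‖ := by
    rw [← Complex.ofReal_sub, Complex.norm_real]
    exact h3.trans (pw_abs_le t)
  have h5 : (1 : ℝ) ≤ p.factorial := by exact_mod_cast Nat.succ_le_of_lt p.factorial_pos
  unfold pwK
  rw [norm_mul, h1, one_mul, norm_div, norm_pow, Complex.norm_natCast, pow_add, mul_comm]
  have h6 : ‖(x : ℂ) - t‖ ^ p / p.factorial ≤ ‖(t : ℂ) - I‖ ^ p :=
    (div_le_self (by positivity) h5).trans (pow_le_pow_left₀ (norm_nonneg _) h4 p)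
  have h7 := pow_le_pow_left₀ (norm_nonneg _) (pw_mono h2) m
  gcongr

lemma pwK_bound0 (p m : ℕ) (x t : ℝ) : ‖pwK p x t‖ ≤ ‖(t : ℂ) - I‖ ^ (m + p) := by
  refine le_trans ?_ (pwK_bound p m x t)
  exact le_mul_of_one_le_right (norm_nonneg _) (one_le_pow₀ (pw_one_le x))

lemma pw_taylor (p : ℕ) (D : ℕ → ℝ → ℂ)
    (hD : ∀ j, j ≤ p → ∀ t, HasDerivAt (D j) (D (j + 1) t) t) (x t : ℝ) :
    HasDerivAt (fun t : ℝ => ∑ j ∈ Finset.range (p + 1), ((x : ℂ) - t) ^ j / (j.factorial : ℂ) * D j t)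
      (((x : ℂ) - t) ^ p / (p.factorial : ℂ) * D (p + 1) t) t := by
  induction p with
  | zero => simpa using hD 0 le_rfl t
  | succ p ih =>
    have h1 := ih (fun j hj => hD j (by omega))
    have hb : HasDerivAt (fun t : ℝ => (x : ℂ) - t) (-1) t := by
      simpa using (Complex.ofRealCLM.hasDerivAt (x := t)).const_sub (x : ℂ)
    have h2 := ((hb.pow (p + 1)).div_const ((p + 1).factorial : ℂ)).mul (hD (p + 1) le_rfl t)
    have h3 := h1.add h2
    simp_rw [Finset.sum_range_succ _ (p + 1)]
    refine h3.congr_deriv ?_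
    have : ((p : ℂ) + 1) ≠ 0 := by exact_mod_cast Nat.succ_ne_zero p
    have : (p.factorial : ℂ) ≠ 0 := by exact_mod_cast p.factorial_ne_zero
    simp only [Nat.factorial_succ, Nat.add_sub_cancel, Pi.pow_apply]
    push_cast
    field_simp
    ring

lemma pw_repr (p m : ℕ) (D : ℕ → ℝ → ℂ)
    (hD : ∀ j, j ≤ p → ∀ t, HasDerivAt (D j) (D (j + 1) t) t)
    (hc : Continuous (D (p + 1)))
    (hlim : ∀ l, l < p + 1 →
      Tendsto (fun x : ℝ => D l x * ((x : ℂ) - I) ^ (m + l)) (cocompact ℝ) (nhds 0))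
    (hint : Integrable (fun x : ℝ => D (p + 1) x * ((x : ℂ) - I) ^ (m + p)) volume) (x : ℝ) :
    D 0 x = ∫ t, pwK p x t * D (p + 1) t := by
  have hF := pw_taylor p D hD x
  set F := (fun t : ℝ => ∑ j ∈ Finset.range (p + 1), ((x : ℂ) - t) ^ j / (j.factorial : ℂ) * D j t)
    with hFd
  have hFx : F x = D 0 x := by
    rw [hFd]
    simp only [sub_self, Finset.sum_range_succ']
    simp
  have hF0 : Tendsto F (cocompact ℝ) (nhds 0) := by
    rw [← Finset.sum_const_zero (s := Finset.range (p + 1)) (ι := ℕ)]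
    refine tendsto_finsetSum _ (fun j hj => ?_)
    have hl := (hlim j (Finset.mem_range.mp hj)).norm.const_mul ((|x| + 1) ^ j)
    rw [norm_zero, mul_zero] at hl
    refine squeeze_zero_norm (fun t => ?_) hl
    have h4 : ‖(x : ℂ) - t‖ ≤ (|x| + 1) * ‖(t : ℂ) - I‖ := by
      rw [← Complex.ofReal_sub, Complex.norm_real, Real.norm_eq_abs]
      have := abs_sub x t
      nlinarith [pw_abs_le t, pw_one_le t, abs_nonneg x]
    have h5 : (1 : ℝ) ≤ j.factorial := by exact_mod_cast Nat.succ_le_of_lt j.factorial_pos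
    rw [norm_mul, norm_div, norm_pow, Complex.norm_natCast, norm_mul, norm_pow]
    have h6 : ‖(x : ℂ) - t‖ ^ j / j.factorial ≤ (|x| + 1) ^ j * ‖(t : ℂ) - I‖ ^ (m + j) := by
      refine (div_le_self (by positivity) h5).trans
        ((pow_le_pow_left₀ (norm_nonneg _) h4 j).trans ?_)
      rw [mul_pow]
      have := pow_le_pow_right₀ (pw_one_le t) (Nat.le_add_left j m)
      gcongr
    calc _ ≤ (|x| + 1) ^ j * ‖(t : ℂ) - I‖ ^ (m + j) * ‖D j t‖ := by gcongr
      _ = _ := by ring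
  have hFc : ∀ t, ContinuousAt F t := fun t => (hF t).continuousAt
  have hKint : Integrable (fun t => pwK p x t * D (p + 1) t) volume := by
    refine hint.mono ?_ (ae_of_all _ fun t => ?_)
    · refine Measurable.aestronglyMeasurable ?_
      exact ((pwK_meas p).comp (measurable_const.prodMk measurable_id)).mul hc.measurable
    · rw [norm_mul, norm_mul, norm_pow, mul_comm]
      exact mul_le_mul_of_nonneg_left (pwK_bound0 p m x t) (norm_nonneg _)
  rw [cocompact_eq_atBot_atTop] at hF0
  by_cases hx : 0 ≤ x
  · have e : ∀ t, pwK p x t * D (p + 1) t = (Set.Ioi x).indicator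
        (fun t => -(((x : ℂ) - t) ^ p / (p.factorial : ℂ) * D (p + 1) t)) t := by
      intro t
      simp only [pwK, pwS, hx, if_true, Set.indicator, Set.mem_Ioi]
      split_ifs <;> ring
    simp_rw [e] at hKint ⊢
    rw [integrable_indicator_iff measurableSet_Ioi] at hKint
    rw [integral_indicator measurableSet_Ioi, integral_neg,
      integral_Ioi_of_hasDerivAt_of_tendsto (hFc x).continuousWithinAt (fun t _ => hF t)
        (by simpa [IntegrableOn] using hKint.neg) (hF0.mono_left le_sup_right), hFx]
    simp
  · have e : ∀ t, pwK p x t * D (p + 1) t = (Set.Iic x).indicator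
        (fun t => (((x : ℂ) - t) ^ p / (p.factorial : ℂ) * D (p + 1) t)) t := by
      intro t
      simp only [pwK, pwS, hx, if_false, Set.indicator, Set.mem_Iic]
      split_ifs <;> ring
    simp_rw [e] at hKint ⊢
    rw [integrable_indicator_iff measurableSet_Iic] at hKint
    rw [integral_indicator measurableSet_Iic,
      integral_Iic_of_hasDerivAt_of_tendsto (hFc x).continuousWithinAt (fun t _ => hF t)
        hKint (hF0.mono_left le_sup_left), hFx]
    simp

lemma pw_meas_u : Measurable (fun x : ℝ => (x : ℂ) - I) :=
  Complex.measurable_ofReal.sub_const _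

theorem partial_integration_with_weight
    (k : ℕ) (ε : ℝ) (hε0 : 0 < ε) (hε1 : ε ≤ 1) (n m : ℕ)
    (μ : Measure ℝ) [IsFiniteMeasure μ] (ρ : ℝ → ℂ) (hρ : Integrable ρ μ) :
    ∃ (ν : Measure ℝ) (_ : IsFiniteMeasure ν) (σ : ℝ → ℂ),
      Integrable σ ν ∧
      (∫ x, ‖σ x‖ ∂ν) ≤ (∫ x : ℝ, ‖(x : ℂ) - I‖ ^ (-(1 + ε))) * (∫ x, ‖ρ x‖ ∂μ) ∧
      ∀ g : ℝ → ℂ, ContDiff ℝ (n + k : ℕ) g →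
        (∀ l : ℕ, l < k →
          Tendsto (fun x : ℝ => iteratedDeriv (n + l) g x * ((x : ℂ) - I) ^ (m + l))
            (cocompact ℝ) (nhds 0)) →
        Integrable
          (fun x : ℝ => iteratedDeriv (n + k) g x * ((x : ℂ) - I) ^ ((m : ℤ) + k - 1))
          volume →
        ∫ x, iteratedDeriv n g x * ((x : ℂ) - I) ^ m * ρ x ∂μ
          = ∫ x, iteratedDeriv (n + k) g x * ((x : ℂ) - I) ^ (m + k) *
              ((x : ℂ) - I) ^ (ε : ℂ) * σ x ∂ν := by
  have hcne : ∀ x : ℝ, ((x : ℂ) - I) ^ (ε : ℂ) ≠ 0 := fun x h =>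
    pw_ne x ((Complex.cpow_eq_zero_iff _ _).mp h).1
  have hcm : Measurable (fun x : ℝ => ((x : ℂ) - I) ^ (ε : ℂ)) := pw_meas_u.pow_const _
  rcases k with _ | p
  · have hle : ∀ x : ℝ, ‖(((x : ℂ) - I) ^ (ε : ℂ))⁻¹ * ρ x‖ ≤ ‖ρ x‖ := by
      intro x
      rw [norm_mul, norm_inv, pw_norm_cpow]
      exact mul_le_of_le_one_left (norm_nonneg _)
        (inv_le_one_of_one_le₀ (Real.one_le_rpow (pw_one_le x) hε0.le))
    have hi : Integrable (fun x : ℝ => (((x : ℂ) - I) ^ (ε : ℂ))⁻¹ * ρ x) μ :=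
      hρ.mono (hcm.inv.aestronglyMeasurable.mul hρ.1) (ae_of_all _ hle)
    refine ⟨μ, inferInstance, _, hi, ?_, ?_⟩
    · refine (integral_mono hi.norm hρ.norm hle).trans ?_
      exact le_mul_of_one_le_left (integral_nonneg fun _ => norm_nonneg _)
        (pw_one_le_int ε hε0 hε1)
    · intro g _ _ _
      congr 1
      funext x
      simp only [add_zero]
      have := hcne x
      field_simp
  · set w : ℝ → NNReal := fun x => Real.toNNReal (‖(x : ℂ) - I‖ ^ (-(1 + ε))) with hw
    have hwc : ∀ x, (w x : ℝ) = ‖(x : ℂ) - I‖ ^ (-(1 + ε)) := fun x =>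
      Real.coe_toNNReal _ (by positivity)
    have hwm : Measurable w := (pw_meas_u.norm.pow_const _).real_toNNReal
    set ν : Measure ℝ := volume.withDensity (fun x => (w x : ENNReal)) with hν
    have hfin : IsFiniteMeasure ν :=
      isFiniteMeasure_withDensity_ofReal (pw_integrable ε hε0).2
    set M := ∫ x, ‖ρ x‖ ∂μ with hM
    set h : ℝ → ℂ := fun t => ∫ x, pwK p x t * ((x : ℂ) - I) ^ m * ρ x ∂μ with hh
    have hhb : ∀ t, ‖h t‖ ≤ ‖(t : ℂ) - I‖ ^ (m + p) * M := by
      intro t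
      rw [hh, hM, ← integral_const_mul]
      refine norm_integral_le_of_norm_le (hρ.norm.const_mul _) (ae_of_all _ fun x => ?_)
      rw [norm_mul, norm_mul, norm_pow]
      exact mul_le_mul_of_nonneg_right (pwK_bound p m x t) (norm_nonneg _)
    have hprodm : AEStronglyMeasurable
        (fun z : ℝ × ℝ => pwK p z.2 z.1 * ((z.2 : ℂ) - I) ^ m * ρ z.2)
        ((volume : Measure ℝ).prod μ) := by
      refine AEStronglyMeasurable.mul ?_ hρ.1.comp_snd
      exact (((pwK_meas p).comp measurable_swap).mul
        ((pw_meas_u.comp measurable_snd).pow_const m)).aestronglyMeasurable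
    have hhm : AEStronglyMeasurable h volume := hprodm.integral_prod_right'
    set σ : ℝ → ℂ := fun t => h t * (((t : ℂ) - I) ^ (m + (p + 1)) * ((t : ℂ) - I) ^ (ε : ℂ))⁻¹ *
      ((‖(t : ℂ) - I‖ ^ (1 + ε) : ℝ) : ℂ) with hσ
    have hσm : AEStronglyMeasurable σ volume := by
      refine (hhm.mul ?_).mul ?_
      · exact (((pw_meas_u.pow_const _).mul hcm).inv).aestronglyMeasurable
      · exact (Complex.measurable_ofReal.comp (pw_meas_u.norm.pow_const _)).aestronglyMeasurable
    have hσb : ∀ t, ‖σ t‖ ≤ M := by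
      intro t
      have hp : 0 < ‖(t : ℂ) - I‖ := lt_of_lt_of_le one_pos (pw_one_le t)
      rw [hσ]
      simp only [norm_mul, norm_inv, norm_pow, pw_norm_cpow, Complex.norm_real, Real.norm_eq_abs]
      rw [abs_of_pos (Real.rpow_pos_of_pos hp _), Real.rpow_add hp, Real.rpow_one]
      have hpe := Real.rpow_pos_of_pos hp ε
      have := hhb t
      calc _ = ‖h t‖ / ‖(t : ℂ) - I‖ ^ (m + p) := by
            field_simp
            try ring
        _ ≤ M := by
            rw [div_le_iff₀ (by positivity)]
            linarith
    have hσν : AEStronglyMeasurable σ ν :=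
      hσm.mono_ac (withDensity_absolutelyContinuous _ _)
    have hσi : Integrable σ ν := Integrable.of_bound hσν M (ae_of_all _ hσb)
    refine ⟨ν, hfin, σ, hσi, ?_, ?_⟩
    · rw [hν, integral_withDensity_eq_integral_smul hwm, ← integral_mul_const]
      refine integral_mono_of_nonneg (ae_of_all _ fun t => by positivity)
        ((pw_integrable ε hε0).mul_const M) (ae_of_all _ fun t => ?_)
      simp only [NNReal.smul_def, hwc, smul_eq_mul]
      exact mul_le_mul_of_nonneg_left (hσb t) (by positivity)
    · intro g hg hlim hint
      have hexp : ((m : ℤ) + ((p + 1 : ℕ) : ℤ) - 1) = ((m + p : ℕ) : ℤ) := by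
        push_cast; ring
      rw [hexp] at hint
      simp only [zpow_natCast] at hint
      have hc : Continuous (iteratedDeriv (n + (p + 1)) g) :=
        hg.continuous_iteratedDeriv _ le_rfl
      have hrep := pw_repr p m (fun j => iteratedDeriv (n + j) g)
        (fun j hj t => by
          have hd : Differentiable ℝ (iteratedDeriv (n + j) g) :=
            hg.differentiable_iteratedDeriv _ (by exact_mod_cast (by omega : n + j < n + (p + 1)))
          have := (hd t).hasDerivAt
          rwa [← iteratedDeriv_succ] at this) hc hlim hint
      simp only [add_zero] at hrep
      rw [hν, integral_withDensity_eq_integral_smul hwm]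
      have hR : ∀ t : ℝ, w t • (iteratedDeriv (n + (p + 1)) g t * ((t : ℂ) - I) ^ (m + (p + 1)) *
              ((t : ℂ) - I) ^ (ε : ℂ) * σ t) =
          ∫ x, iteratedDeriv (n + (p + 1)) g t * (pwK p x t * ((x : ℂ) - I) ^ m * ρ x) ∂μ := by
        intro t
        have hp : 0 < ‖(t : ℂ) - I‖ := lt_of_lt_of_le one_pos (pw_one_le t)
        rw [integral_const_mul, NNReal.smul_def, hwc, Complex.real_smul, hσ]
        have e1 : ((‖(t : ℂ) - I‖ ^ (-(1 + ε)) : ℝ) : ℂ) * ((‖(t : ℂ) - I‖ ^ (1 + ε) : ℝ) : ℂ) = 1 := by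
          rw [← Complex.ofReal_mul, ← Real.rpow_add hp]
          simp
        have e2 := mul_inv_cancel₀ (mul_ne_zero (pow_ne_zero (m + (p + 1)) (pw_ne t)) (hcne t))
        simp only
        generalize ((t : ℂ) - I) ^ (m + (p + 1)) = A at *
        generalize ((t : ℂ) - I) ^ (ε : ℂ) = B at *
        change _ = iteratedDeriv (n + (p + 1)) g t * h t
        linear_combination (iteratedDeriv (n + (p + 1)) g t * h t * (A * B * (A * B)⁻¹)) * e1 +
          (iteratedDeriv (n + (p + 1)) g t * h t) * e2
      simp_rw [hR]
      rw [integral_integral_swap]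
      · congr 1
        funext x
        rw [hrep x, mul_assoc, ← integral_mul_const]
        congr 1
        funext t
        ring
      · refine (Integrable.mul_prod hint hρ).mono ?_ (ae_of_all _ fun z => ?_)
        · exact (hc.comp continuous_fst).aestronglyMeasurable.mul hprodm
        · simp only [Function.uncurry, norm_mul, norm_pow]
          have := pwK_bound p m z.2 z.1
          calc _ = ‖iteratedDeriv (n + (p + 1)) g z.1‖ *
                (‖pwK p z.2 z.1‖ * ‖(z.2 : ℂ) - I‖ ^ m) * ‖ρ z.2‖ := by ring
            _ ≤ _ := by gcongr
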